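/- The ring ℂ[u,v], regarded as a module over ℂ[x,y,z,t] via ψ, is generated by the three elements 1, u, v; equivalently, the ℂ[x,y,z,t]-linear map φ : ℂ[x,y,z,t]³ → ℂ[u,v] given by (a,b,c) ↦ ψ(a)·v + ψ(b)·u + ψ(c) is surjective. -/

import Mathlib

noncomputable section

open MvPolynomial

namespace Reid

abbrev A : Type := MvPolynomial (Fin 4) ℂ
abbrev B : Type := MvPolynomial (Fin 2) ℂ

def u : B := X 0
def v : B := X 1

/-- The ℂ-algebra homomorphism `ψ : ℂ[x,y,z,t] → ℂ[u,v]` with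
`ψ(x) = u²`, `ψ(y) = uv`, `ψ(z) = u³ + v²`, `ψ(t) = u³v + v³`. -/
def ψ : A →ₐ[ℂ] B := aeval ![u ^ 2, u * v, u ^ 3 + v ^ 2, u ^ 3 * v + v ^ 3]

/-!
The span of `1, u, v` is the whole ring as soon as it is closed under multiplication, and for this
it only has to contain `u ^ 2`, `u * v` and `v ^ 2`. The first two are scalars
(they lie in the image of `ψ`), and `v ^ 2 = (u ^ 3 + v ^ 2) - u ^ 2 * u` is a scalar minus a scalar
multiple of `u`.
-/

section Span

variable {R S : Type*}

theorem span_insert_one_eq_top_of_mul_mem [CommSemiring R] [Semiring S] [Algebra R S] {s : Set S}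
    (hs : Algebra.adjoin R s = ⊤)
    (hmul : ∀ a ∈ s, ∀ b ∈ s, a * b ∈ Submodule.span R (insert 1 s)) :
    Submodule.span R (insert 1 s) = ⊤ := by
  set M := Submodule.span R (insert 1 s) with hM
  have subset_M : insert 1 s ⊆ (M : Set S) := Submodule.subset_span
  have one_mem : (1 : S) ∈ M := subset_M (Set.mem_insert 1 s)
  have mul_le : M * M ≤ M := by
    rw [hM, Submodule.span_mul_span, Submodule.span_le]
    rintro _ ⟨a, rfl | ha, b, hb, rfl⟩
    · simpa only [one_mul] using subset_M hb
    · obtain rfl | hb := hb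
      · simpa only [mul_one] using subset_M (Set.mem_insert_of_mem 1 ha)
      · exact hmul a ha b hb
  let T : Subalgebra R S :=
    M.toSubalgebra one_mem fun _ _ ha hb => mul_le (Submodule.mul_mem_mul ha hb)
  have adjoin_le : Algebra.adjoin R s ≤ T :=
    Algebra.adjoin_le ((Set.subset_insert 1 s).trans subset_M)
  exact eq_top_iff.2 fun x _ => adjoin_le (hs ▸ Algebra.mem_top)

theorem span_one_pair_eq_top_of_cube_add_sq [CommRing R] [CommRing S] [Algebra R S]
    {p q : S} {x y z : R} (hgen : Algebra.adjoin R {p, q} = ⊤)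
    (hx : algebraMap R S x = p ^ 2) (hy : algebraMap R S y = p * q)
    (hz : algebraMap R S z = p ^ 3 + q ^ 2) :
    Submodule.span R {1, p, q} = ⊤ := by
  have algebraMap_mem (r : R) : algebraMap R S r ∈ Submodule.span R {1, p, q} := by
    rw [Algebra.algebraMap_eq_smul_one]
    exact Submodule.smul_mem _ r (Submodule.subset_span (by simp))
  have p_sq_mem : p * p ∈ Submodule.span R {1, p, q} := by
    simpa only [hx, sq] using algebraMap_mem x
  have p_mul_q_mem : p * q ∈ Submodule.span R {1, p, q} := hy ▸ algebraMap_mem y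
  have q_sq_mem : q * q ∈ Submodule.span R {1, p, q} := by
    have q_sq_eq : q * q = algebraMap R S z - x • p := by
      rw [Algebra.smul_def, hx, hz]
      ring
    rw [q_sq_eq]
    exact Submodule.sub_mem _ (algebraMap_mem z)
      (Submodule.smul_mem _ x (Submodule.subset_span (by simp)))
  refine span_insert_one_eq_top_of_mul_mem hgen ?_
  simp only [Set.mem_insert_iff, Set.mem_singleton_iff, forall_eq_or_imp, forall_eq]
  exact ⟨⟨p_sq_mem, p_mul_q_mem⟩, mul_comm p q ▸ p_mul_q_mem, q_sq_mem⟩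

end Span

theorem module_generated_by_one_u_v_general {k R S : Type*} [CommRing k] [Ring R] [CommRing S]
    [Algebra k R] [Algebra k S] (f : R →ₐ[k] S) {p q : S} (hgen : Algebra.adjoin k {p, q} = ⊤)
    (hp : p ^ 2 ∈ f.range) (hpq : p * q ∈ f.range) (hq : p ^ 3 + q ^ 2 ∈ f.range) :
    Function.Surjective (fun w : Fin 3 → R => f (w 0) * q + f (w 1) * p + f (w 2)) := by
  have hgen_range : Algebra.adjoin f.range {p, q} = ⊤ := by
    rw [← Algebra.adjoin_adjoin_of_tower k, hgen, Algebra.coe_top, Algebra.adjoin_univ]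
  have hspan : Submodule.span f.range {1, p, q} = ⊤ :=
    span_one_pair_eq_top_of_cube_add_sq
      (x := ⟨_, hp⟩) (y := ⟨_, hpq⟩) (z := ⟨_, hq⟩) hgen_range rfl rfl rfl
  intro s
  obtain ⟨⟨_, c, rfl⟩, ⟨_, b, rfl⟩, ⟨_, a, rfl⟩, rfl⟩ :=
    Submodule.mem_span_triple.1 (hspan ▸ Submodule.mem_top : s ∈ Submodule.span f.range {1, p, q})
  refine ⟨![a, b, c], ?_⟩
  simp only [Matrix.cons_val_zero, Matrix.cons_val_one, Matrix.cons_val, AlgHom.toRingHom_eq_coe,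
    RingHom.coe_coe, Subalgebra.smul_def, smul_eq_mul, mul_one]
  ring

theorem adjoin_u_v : Algebra.adjoin ℂ {u, v} = ⊤ := by
  have range_X : Set.range (X : Fin 2 → B) = {u, v} := by
    ext; simp [u, v, eq_comm]
  rw [← range_X, adjoin_range_X]

theorem ψ_X_zero : ψ (X 0) = u ^ 2 := by simp [ψ]

theorem ψ_X_one : ψ (X 1) = u * v := by simp [ψ]

theorem ψ_X_two : ψ (X 2) = u ^ 3 + v ^ 2 := by simp [ψ]

/-- `ℂ[u,v]` is generated by `1, u, v` as a module over `ℂ[x,y,z,t]` (acting via `ψ`):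
the map `φ : (a,b,c) ↦ ψ(a)·v + ψ(b)·u + ψ(c)` is surjective. -/
theorem module_generated_by_one_u_v :
    Function.Surjective (fun w : Fin 3 → A => ψ (w 0) * v + ψ (w 1) * u + ψ (w 2)) :=
  module_generated_by_one_u_v_general ψ adjoin_u_v
    ⟨X 0, ψ_X_zero⟩ ⟨X 1, ψ_X_one⟩ ⟨X 2, ψ_X_two⟩

end Reid
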